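/- arXiv:1103.0203 — 2 statements merged into one kernel-verified Lean document; each statement's English description precedes it below -/
import Mathlib

section
/- Let m ≥ 1 and let g, h ∈ ℂ[x_0,x_1,x_2] be homogeneous of degree m whose common zero locus in P² consists of exactly m² distinct points [v_1],…,[v_{m²}] (a transverse complete intersection). Then the evaluation map sending a homogeneous polynomial p of degree 2m to (p(v_1),…,p(v_{m²})) ∈ ℂ^{m²} is surjective; equivalently, the powers ℓ_{v_1}^{2m},…,ℓ_{v_{m²}}^{2m} are linearly independent in the space of homogeneous polynomials of degree 2m. -/
open MvPolynomial

/-- The linear form `ℓ_v = Σ_j v_j x_j` associated to a vector `v ∈ ℂ^k`. -/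
noncomputable def linForm (k : ℕ) (v : Fin k → ℂ) : MvPolynomial (Fin k) ℂ :=
  ∑ j, MvPolynomial.C (v j) * MvPolynomial.X j

/-!
Let `L` be a line that misses every common zero of `g` and `h`. The restrictions of `g` and `h` to
`L` are binary forms of degrees `m` and `n` without common zeros, so by Bézout's identity they
generate all binary forms of degree at least `m + n - 1`. Hence every form of degree
`d + 1 ≥ m + n - 1` is, modulo `(g, h)`, a multiple of the equation of `L`. As that equation takes
nonzero values at the points, independence of the conditions descends from degree `d + 1` to
degree `d`, for every `d ≥ m + n - 2`. In large degrees the conditions are independent because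
products of linear forms separate the points.

Linear independence of the powers is the dual statement: up to multinomial factors, the
coefficients of `∑ i, c i • ℓ_{v i} ^ d` are the values of the functional `p ↦ ∑ i, c i * p (v i)`
on the monomials of degree `d`.
-/

section Homogeneous

lemma eval_smul_of_isHomogeneous {σ R : Type*} [CommSemiring R] {p : MvPolynomial σ R} {d : ℕ}
    (hp : p.IsHomogeneous d) (c : R) (w : σ → R) : eval (c • w) p = c ^ d * eval w p := by
  rw [eval_eq, eval_eq, Finset.mul_sum]
  refine Finset.sum_congr rfl fun α hα ↦ ?_
  rw [hp.degree_eq_sum_deg_support hα, ← Finset.prod_pow_eq_pow_sum]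
  simp only [Pi.smul_apply, smul_eq_mul, mul_pow, Finset.prod_mul_distrib]
  ring

attribute [local instance] MvPolynomial.gradedAlgebra

lemma homogeneousComponent_mul_of_isHomogeneous_left {σ R : Type*} [CommSemiring R]
    {a : MvPolynomial σ R} {k : ℕ} (ha : a.IsHomogeneous k) (n : ℕ) (b : MvPolynomial σ R) :
    homogeneousComponent (k + n) (a * b) = a * homogeneousComponent n b := by
  rw [← decomposition.decompose'_apply, ← decomposition.decompose'_apply]
  exact DirectSum.coe_decompose_mul_add_of_left_mem (homogeneousSubmodule σ R)
    ((mem_homogeneousSubmodule k a).2 ha)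

lemma exists_isHomogeneous_eq_mul_of_dvd {σ R : Type*} [CommSemiring R]
    {a q : MvPolynomial σ R} {k n : ℕ} (ha : a.IsHomogeneous k) (hq : q.IsHomogeneous (k + n))
    (haq : a ∣ q) : ∃ b : MvPolynomial σ R, b.IsHomogeneous n ∧ q = a * b := by
  obtain ⟨b, rfl⟩ := haq
  refine ⟨homogeneousComponent n b, homogeneousComponent_isHomogeneous n b, ?_⟩
  rw [← homogeneousComponent_mul_of_isHomogeneous_left ha, homogeneousComponent_eq_self hq]

end Homogeneous

section BinaryForms

lemma eval_one_zero_homogenize {R : Type*} [CommSemiring R] (p : Polynomial R) (n : ℕ) :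
    eval ![1, 0] (p.homogenize n) = p.coeff n := by
  rw [Polynomial.homogenize, map_sum, Finset.sum_eq_single (n, 0)]
  · simp [Finsupp.update_eq_add_single, eval_monomial]
  · rintro ⟨a, b⟩ hab hne
    have hb : b ≠ 0 := by
      rintro rfl
      simp_all
    simp [Finsupp.update_eq_add_single, eval_monomial, Finsupp.prod_fintype, hb]
  · simp

lemma exists_homogenize_eq {R : Type*} [CommSemiring R] {q : MvPolynomial (Fin 2) R} {n : ℕ}
    (hq : q.IsHomogeneous n) : ∃ p : Polynomial R, p.natDegree ≤ n ∧ p.homogenize n = q := by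
  refine ⟨aeval ![Polynomial.X, 1] q, ?_, Polynomial.homogenize_eq_of_isHomogeneous hq rfl⟩
  have hdeg : ∀ i, (![Polynomial.X, 1] i : Polynomial R).natDegree ≤ 1 :=
    Fin.forall_fin_two.2 ⟨Polynomial.natDegree_X_le, by simp⟩
  simpa using aeval_natDegree_le q hq.totalDegree_le _ hdeg

variable {K : Type*} [Field K]

lemma exists_natDegree_le_mul_add_mul_eq {G H Q : Polynomial K} {n e : ℕ} (hGH : IsCoprime G H)
    (hG : 0 < G.natDegree) (hH : H.natDegree ≤ n) (hQ : Q.natDegree ≤ e)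
    (he : G.natDegree + n ≤ e + 1) :
    ∃ A B : Polynomial K,
      A.natDegree ≤ e - G.natDegree ∧ B.natDegree ≤ e - n ∧ A * G + B * H = Q := by
  obtain ⟨a, b, hab⟩ := hGH
  obtain ⟨A, B, hB, hsum⟩ : ∃ A B : Polynomial K,
      B.natDegree < G.natDegree ∧ A * G + B * H = Q :=
    ⟨Q * a + Q * b / G * H, Q * b % G, Polynomial.natDegree_mod_lt _ hG.ne',
      by linear_combination Q * hab + H * EuclideanDomain.div_add_mod (Q * b) G⟩
  refine ⟨A, B, ?_, by lia, hsum⟩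
  rcases eq_or_ne A 0 with rfl | hA
  · simp
  have hBH : (B * H).natDegree ≤ e := Polynomial.natDegree_mul_le.trans (by lia)
  have hAG : (A * G).natDegree ≤ e := by
    rw [eq_sub_of_add_eq hsum]
    exact (Polynomial.natDegree_sub_le _ _).trans (max_le hQ hBH)
  rw [Polynomial.natDegree_mul hA (Polynomial.ne_zero_of_natDegree_gt hG)] at hAG
  lia

variable [IsAlgClosed K]

lemma isCoprime_of_forall_eval_homogenize_ne_zero {G H : Polynomial K} {m n : ℕ}
    (hG : G.natDegree ≤ m) (hH : H.natDegree ≤ n)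
    (hGH : ∀ w ≠ 0, eval w (G.homogenize m) = 0 → eval w (H.homogenize n) ≠ 0) :
    IsCoprime G H := by
  refine (Polynomial.isCoprime_iff_aeval_ne_zero_of_isAlgClosed K K G H).2 fun a ↦ ?_
  have ha := hGH ![a, 1] fun h0 ↦ by simpa using congrFun h0 1
  rw [Polynomial.eval_homogenize hG _ (by simp), Polynomial.eval_homogenize hH _ (by simp)] at ha
  simpa [or_iff_not_imp_left] using ha

theorem exists_isHomogeneous_mul_add_mul_eq {G H Q : MvPolynomial (Fin 2) K} {m n e : ℕ}
    (hm : 1 ≤ m) (hn : 1 ≤ n) (he : m + n ≤ e + 1)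
    (hG : G.IsHomogeneous m) (hH : H.IsHomogeneous n) (hQ : Q.IsHomogeneous e)
    (hGH : ∀ w ≠ 0, eval w G = 0 → eval w H ≠ 0) :
    ∃ A B : MvPolynomial (Fin 2) K,
      A.IsHomogeneous (e - m) ∧ B.IsHomogeneous (e - n) ∧ A * G + B * H = Q := by
  -- Dehomogenizing preserves the degree of a form only if it does not vanish at `(1, 0)`.
  wlog hG1 : eval ![1, 0] G ≠ 0 generalizing G H m n
  · have hH1 : eval ![1, 0] H ≠ 0 :=
      hGH _ (fun h0 ↦ by simpa using congrFun h0 0) (not_not.1 hG1)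
    obtain ⟨B, A, hB, hA, hsum⟩ :=
      this hn hm (by lia) hH hG (fun w hw h1 h2 ↦ hGH w hw h2 h1) hH1
    exact ⟨A, B, hA, hB, by rw [add_comm, hsum]⟩
  obtain ⟨G, hGm, rfl⟩ := exists_homogenize_eq hG
  obtain ⟨H, hHn, rfl⟩ := exists_homogenize_eq hH
  obtain ⟨Q, hQe, rfl⟩ := exists_homogenize_eq hQ
  rw [eval_one_zero_homogenize] at hG1
  obtain rfl : G.natDegree = m := hGm.antisymm (Polynomial.le_natDegree_of_ne_zero hG1)
  obtain ⟨A, B, hA, hB, rfl⟩ := exists_natDegree_le_mul_add_mul_eq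
    (isCoprime_of_forall_eval_homogenize_ne_zero hGm hHn hGH) hm hHn hQe he
  refine ⟨A.homogenize _, B.homogenize _, Polynomial.isHomogeneous_homogenize A,
    Polynomial.isHomogeneous_homogenize B, ?_⟩
  rw [← Polynomial.homogenize_mul A G hA hGm, ← Polynomial.homogenize_mul B H hB hHn,
    Nat.sub_add_cancel (by lia), Nat.sub_add_cancel (by lia), Polynomial.homogenize_add]

end BinaryForms

section RestrictToGraph

variable {R : Type*} [CommRing R] {n : ℕ}

/-- Restriction of polynomials to the hypersurface `x₀ = r(x₁, …, xₙ)`, parametrized by its last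
`n` coordinates. When `r` is a linear form this is restriction to a hyperplane. -/
noncomputable def restrictToGraph (r : MvPolynomial (Fin n) R) :
    MvPolynomial (Fin (n + 1)) R →ₐ[R] MvPolynomial (Fin n) R :=
  aeval (Fin.cons r X)

variable (r : MvPolynomial (Fin n) R)

lemma eval_restrictToGraph (w : Fin n → R) (p : MvPolynomial (Fin (n + 1)) R) :
    eval w (restrictToGraph r p) = eval (Fin.cons (eval w r) w : Fin (n + 1) → R) p := by
  have hcons : (fun i ↦ eval w ((Fin.cons r X : Fin (n + 1) → MvPolynomial (Fin n) R) i)) =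
      Fin.cons (eval w r) w := by
    funext i
    cases i using Fin.cases <;> simp
  rw [← hcons, ← coe_aeval_eq_eval, ← coe_aeval_eq_eval]
  exact comp_aeval_apply _ (aeval w) p

lemma restrictToGraph_rename_succ (p : MvPolynomial (Fin n) R) :
    restrictToGraph r (rename Fin.succ p) = p := by
  rw [restrictToGraph, aeval_rename]
  exact aeval_X_left_apply p

lemma X_zero_sub_rename_succ_dvd (p : MvPolynomial (Fin (n + 1)) R) :
    X 0 - rename Fin.succ r ∣ p - rename Fin.succ (restrictToGraph r p) := by
  let π := Ideal.Quotient.mkₐ R (Ideal.span {X 0 - rename Fin.succ r})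
  have hπ : (π.comp (rename Fin.succ)).comp (restrictToGraph r) = π := by
    ext i
    cases i using Fin.cases
    · have hX : π (rename Fin.succ r) = π (X 0) :=
        (Ideal.Quotient.eq.2 (Ideal.mem_span_singleton_self _)).symm
      simpa [restrictToGraph] using hX
    · simp [restrictToGraph]
  rw [← Ideal.mem_span_singleton, ← Ideal.Quotient.eq]
  exact (DFunLike.congr_fun hπ p).symm

variable {r}

lemma isHomogeneous_restrictToGraph (hr : r.IsHomogeneous 1) {p : MvPolynomial (Fin (n + 1)) R}
    {d : ℕ} (hp : p.IsHomogeneous d) : (restrictToGraph r p).IsHomogeneous d := by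
  have hcons (i : Fin (n + 1)) :
      ((Fin.cons r X : Fin (n + 1) → MvPolynomial (Fin n) R) i).IsHomogeneous 1 := by
    cases i using Fin.cases
    · exact hr
    · exact isHomogeneous_X R _
  rw [← one_mul d]
  exact hp.aeval _ hcons

lemma X_zero_sub_rename_succ_dvd_of_restrictToGraph_eq_zero {p : MvPolynomial (Fin (n + 1)) R}
    (hp : restrictToGraph r p = 0) : X 0 - rename Fin.succ r ∣ p := by
  simpa [hp] using X_zero_sub_rename_succ_dvd r p

lemma isHomogeneous_X_zero_sub_rename_succ (hr : r.IsHomogeneous 1) :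
    (X 0 - rename Fin.succ r).IsHomogeneous 1 :=
  (isHomogeneous_X R 0).sub hr.rename_isHomogeneous

end RestrictToGraph

section LinearForms

lemma exists_isHomogeneous_one_forall_eval_eq {σ R : Type*} [Finite σ] [CommSemiring R]
    (f : Module.Dual R (σ → R)) :
    ∃ L : MvPolynomial σ R, L.IsHomogeneous 1 ∧ ∀ w, eval w L = f w := by
  classical
  cases nonempty_fintype σ
  obtain ⟨a, rfl⟩ := (dotProductEquiv R σ).surjective f
  exact ⟨∑ j, C (a j) * X j, IsHomogeneous.sum _ _ _ fun _ _ ↦ isHomogeneous_C_mul_X _ _,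
    fun w ↦ by simp [dotProduct]⟩

variable {K : Type*} [Field K]

lemma exists_isHomogeneous_one_separating {σ : Type*} [Finite σ] {u w : σ → K}
    (huw : ∀ c : K, u ≠ c • w) :
    ∃ L : MvPolynomial σ K, L.IsHomogeneous 1 ∧ eval u L ≠ 0 ∧ eval w L = 0 := by
  have hu : u ∉ Submodule.span K {w} := by
    rw [Submodule.mem_span_singleton]
    rintro ⟨c, hc⟩
    exact huw c hc.symm
  obtain ⟨f, hfu, hf⟩ := Submodule.exists_le_ker_of_notMem hu
  obtain ⟨L, hL, hLf⟩ := exists_isHomogeneous_one_forall_eval_eq f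
  exact ⟨L, hL, by rwa [hLf], by rw [hLf]; exact hf (Submodule.mem_span_singleton_self w)⟩

lemma exists_isHomogeneous_one_graph_avoiding {ι : Type*} [Finite ι]
    [Infinite K] {n : ℕ} {v : ι → Fin (n + 1) → K} (hv : ∀ i, v i ≠ 0) :
    ∃ r : MvPolynomial (Fin n) K, r.IsHomogeneous 1 ∧
      ∀ i, eval (v i) (X 0 - rename Fin.succ r) ≠ 0 := by
  -- Avoiding the first basis vector as well makes the coefficient of `X 0` nonzero.
  obtain ⟨f, hf⟩ := Module.exists_dual_forall_apply_ne_zero (K := K)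
    (fun i : Option ι ↦ i.elim (Pi.single 0 1) v) (Option.forall.2 ⟨by simp, hv⟩)
  obtain ⟨hf0, hfv⟩ := Option.forall.1 hf
  simp only [Option.elim_none, Option.elim_some] at hf0 hfv
  obtain ⟨a, rfl⟩ := (dotProductEquiv K (Fin (n + 1))).surjective f
  simp only [dotProductEquiv_apply_apply, dotProduct_single, mul_one] at hf0 hfv
  refine ⟨∑ j : Fin n, C (-(a j.succ / a 0)) * X j,
    IsHomogeneous.sum _ _ _ fun _ _ ↦ isHomogeneous_C_mul_X _ _, fun i hi ↦ hfv i ?_⟩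
  simp only [map_sub, map_sum, map_mul, eval_X, eval_C, rename_X, rename_C] at hi
  rw [dotProduct, Fin.sum_univ_succ, ← mul_zero (a 0), ← hi, mul_sub, Finset.mul_sum,
    sub_eq_add_neg, ← Finset.sum_neg_distrib]
  congr! 2 with j
  field_simp

end LinearForms

/-- The points `[v i]` impose independent conditions on forms of degree `d`: evaluation at the
representatives `v i` maps the forms of degree `d` onto all families of scalars. Rescaling the
representatives by units does not affect this. -/
def ImposesIndependentConditions {ι σ R : Type*} [CommSemiring R] (v : ι → σ → R) (d : ℕ) : Prop :=
  ∀ y : ι → R, ∃ p : MvPolynomial σ R, p.IsHomogeneous d ∧ ∀ i, eval (v i) p = y i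

namespace ImposesIndependentConditions

variable {ι σ K : Type*} [Field K] {v : ι → σ → K} {d e : ℕ}

lemma of_separating [Finite ι]
    (h : ∀ i, ∃ p : MvPolynomial σ K, p.IsHomogeneous d ∧ eval (v i) p ≠ 0 ∧
      ∀ j ≠ i, eval (v j) p = 0) : ImposesIndependentConditions v d := by
  cases nonempty_fintype ι
  choose p hp hpi hpj using h
  refine fun y ↦ ⟨∑ i, C (y i / eval (v i) (p i)) * p i,
    IsHomogeneous.sum _ _ _ fun i _ ↦ (hp i).C_mul _, fun j ↦ ?_⟩
  rw [map_sum, Fintype.sum_eq_single j fun i hij ↦ by rw [map_mul, hpj i j hij.symm, mul_zero],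
    map_mul, eval_C, div_mul_cancel₀ _ (hpi j)]

lemma mono {L : MvPolynomial σ K} (hL : L.IsHomogeneous 1) (hLv : ∀ i, eval (v i) L ≠ 0)
    (hde : d ≤ e) (hd : ImposesIndependentConditions v d) : ImposesIndependentConditions v e := by
  intro y
  obtain ⟨p, hp, hpy⟩ := hd fun i ↦ y i / eval (v i) L ^ (e - d)
  refine ⟨L ^ (e - d) * p, ?_, fun i ↦ ?_⟩
  · simpa [Nat.sub_add_cancel hde] using (hL.pow (e - d)).mul hp
  · rw [map_mul, map_pow, hpy, mul_div_cancel₀ _ (pow_ne_zero _ (hLv i))]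

lemma of_succ {L : MvPolynomial σ K} (hLv : ∀ i, eval (v i) L ≠ 0)
    (hdiv : ∀ q : MvPolynomial σ K, q.IsHomogeneous (d + 1) →
      ∃ p : MvPolynomial σ K, p.IsHomogeneous d ∧ ∀ i, eval (v i) q = eval (v i) (L * p))
    (h : ImposesIndependentConditions v (d + 1)) : ImposesIndependentConditions v d := by
  intro y
  obtain ⟨q, hq, hqy⟩ := h fun i ↦ eval (v i) L * y i
  obtain ⟨p, hp, hpq⟩ := hdiv q hq
  refine ⟨p, hp, fun i ↦ mul_left_cancel₀ (hLv i) ?_⟩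
  rw [← map_mul, ← hpq, hqy]

end ImposesIndependentConditions

lemma imposesIndependentConditions_card_sub_one {ι σ K : Type*} [Field K] [Fintype ι] [Finite σ]
    {v : ι → σ → K} (hv : Pairwise fun i j ↦ ∀ c : K, v i ≠ c • v j) :
    ImposesIndependentConditions v (Fintype.card ι - 1) := by
  classical
  refine .of_separating fun i ↦ ?_
  have hsep (j : ι) (hj : j ≠ i) := exists_isHomogeneous_one_separating (hv hj.symm)
  choose! L hL hLi hLj using hsep
  refine ⟨∏ j ∈ Finset.univ.erase i, L j, ?_, ?_, fun j hj ↦ ?_⟩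
  · simpa [Finset.card_erase_of_mem] using IsHomogeneous.prod (Finset.univ.erase i) L (fun _ ↦ 1)
      fun j hj ↦ hL j (Finset.ne_of_mem_erase hj)
  · rw [map_prod, Finset.prod_ne_zero_iff]
    exact fun j hj ↦ hLi j (Finset.ne_of_mem_erase hj)
  · rw [map_prod]
    exact Finset.prod_eq_zero (Finset.mem_erase.2 ⟨hj, Finset.mem_univ j⟩) (hLj j hj)

section Apolarity

variable {ι σ R : Type*} [Fintype σ]

lemma coeff_sum_smul_linearCombination_X_pow [CommSemiring R] (s : Finset ι) (c : ι → R)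
    (v : ι → σ → R) (α : σ →₀ ℕ) :
    coeff α (∑ i ∈ s, c i • (∑ j, v i j • X j : MvPolynomial σ R) ^ α.degree) =
      α.multinomial * ∑ i ∈ s, c i * α.prod fun j k ↦ v i j ^ k := by
  simp only [coeff_sum, coeff_smul, coeff_linearCombination_X_pow_of_fintype, smul_eq_mul,
    Finset.mul_sum]
  refine Finset.sum_congr rfl fun i _ ↦ ?_
  rw [if_pos (by rw [Finsupp.degree_apply, Finsupp.sum]), mul_left_comm]

lemma sum_mul_eval_eq_zero_of_sum_smul_pow_eq_zero [CommRing R] [IsDomain R] [CharZero R]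
    {s : Finset ι} {c : ι → R} {v : ι → σ → R} {d : ℕ}
    (hc : ∑ i ∈ s, c i • (∑ j, v i j • X j : MvPolynomial σ R) ^ d = 0)
    {p : MvPolynomial σ R} (hp : p.IsHomogeneous d) : ∑ i ∈ s, c i * eval (v i) p = 0 := by
  have hmonomial {α : σ →₀ ℕ} (hα : α.degree = d) :
      ∑ i ∈ s, c i * α.prod (fun j k ↦ v i j ^ k) = 0 := by
    subst hα
    have hcoeff := coeff_sum_smul_linearCombination_X_pow s c v α
    rw [hc, coeff_zero, eq_comm, mul_eq_zero] at hcoeff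
    refine hcoeff.resolve_left ?_
    rw [Finsupp.multinomial_eq]
    exact_mod_cast (Nat.multinomial_pos _ _).ne'
  calc ∑ i ∈ s, c i * eval (v i) p
      = ∑ α ∈ p.support, coeff α p * ∑ i ∈ s, c i * α.prod fun j k ↦ v i j ^ k := by
        simp only [eval_eq, Finset.mul_sum, Finsupp.prod]
        rw [Finset.sum_comm]
        exact Finset.sum_congr rfl fun α _ ↦ Finset.sum_congr rfl fun i _ ↦ by ring
    _ = 0 := Finset.sum_eq_zero fun α hα ↦ by
        rw [hmonomial (hp.degree_eq_sum_deg_support hα).symm, mul_zero]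

theorem ImposesIndependentConditions.linearIndependent_pow [CommRing R] [IsDomain R] [CharZero R]
    {v : ι → σ → R} {d : ℕ} (hv : ImposesIndependentConditions v d) :
    LinearIndependent R fun i ↦ (∑ j, v i j • X j : MvPolynomial σ R) ^ d := by
  classical
  refine linearIndependent_iff'.2 fun s c hc i hi ↦ ?_
  obtain ⟨p, hp, hpv⟩ := hv (Pi.single i 1)
  simpa [hpv, Pi.single_apply, hi] using sum_mul_eval_eq_zero_of_sum_smul_pow_eq_zero hc hp

end Apolarity

section PlaneCurves

variable {K : Type*} [Field K] [IsAlgClosed K]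
  {m n d : ℕ} {g h : MvPolynomial (Fin 3) K}

lemma exists_isHomogeneous_sub_mul_mem_span_pair {q : MvPolynomial (Fin 3) K}
    {r : MvPolynomial (Fin 2) K} (hm : 1 ≤ m) (hn : 1 ≤ n) (hd : m + n ≤ d + 2)
    (hg : g.IsHomogeneous m) (hh : h.IsHomogeneous n) (hq : q.IsHomogeneous (d + 1))
    (hr : r.IsHomogeneous 1)
    (hgh : ∀ w ≠ 0, eval w (restrictToGraph r g) = 0 → eval w (restrictToGraph r h) ≠ 0) :
    ∃ p : MvPolynomial (Fin 3) K, p.IsHomogeneous d ∧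
      q - (X 0 - rename Fin.succ r) * p ∈ Ideal.span {g, h} := by
  obtain ⟨A, B, hA, hB, hAB⟩ := exists_isHomogeneous_mul_add_mul_eq hm hn hd
    (isHomogeneous_restrictToGraph hr hg) (isHomogeneous_restrictToGraph hr hh)
    (isHomogeneous_restrictToGraph hr hq) hgh
  set b := rename Fin.succ A * g + rename Fin.succ B * h with hb
  have hb_mem : b ∈ Ideal.span {g, h} := Ideal.mem_span_pair.2 ⟨_, _, rfl⟩
  have hb_hom : b.IsHomogeneous (d + 1) := by
    have hAg := hA.rename_isHomogeneous (f := Fin.succ) |>.mul hg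
    have hBh := hB.rename_isHomogeneous (f := Fin.succ) |>.mul hh
    rw [Nat.sub_add_cancel (by lia)] at hAg hBh
    exact hAg.add hBh
  have hdvd : X 0 - rename Fin.succ r ∣ q - b := by
    apply X_zero_sub_rename_succ_dvd_of_restrictToGraph_eq_zero
    rw [hb, map_sub, map_add, map_mul, map_mul, restrictToGraph_rename_succ,
      restrictToGraph_rename_succ, hAB, sub_self]
  obtain ⟨p, hp, hqp⟩ := exists_isHomogeneous_eq_mul_of_dvd
    (isHomogeneous_X_zero_sub_rename_succ hr) (add_comm d 1 ▸ hq.sub hb_hom) hdvd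
  exact ⟨p, hp, by rwa [← hqp, sub_sub_cancel]⟩

variable {ι : Type*} [Finite ι] {v : ι → Fin 3 → K}

lemma imposesIndependentConditions_of_forall_restrictToGraph {r : MvPolynomial (Fin 2) K}
    (hm : 1 ≤ m) (hn : 1 ≤ n) (hd : m + n ≤ d + 2)
    (hg : g.IsHomogeneous m) (hh : h.IsHomogeneous n) (hr : r.IsHomogeneous 1)
    (hgh : ∀ w ≠ 0, eval w (restrictToGraph r g) = 0 → eval w (restrictToGraph r h) ≠ 0)
    (hvr : ∀ i, eval (v i) (X 0 - rename Fin.succ r) ≠ 0)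
    (hdist : Pairwise fun i j ↦ ∀ c : K, v i ≠ c • v j)
    (hzero : ∀ i, eval (v i) g = 0 ∧ eval (v i) h = 0) : ImposesIndependentConditions v d := by
  cases nonempty_fintype ι
  have hlarge : ImposesIndependentConditions v (max d (Fintype.card ι - 1)) :=
    (imposesIndependentConditions_card_sub_one hdist).mono
      (isHomogeneous_X_zero_sub_rename_succ hr) hvr (le_max_right _ _)
  refine Nat.decreasingInduction' (fun k _ hdk hk ↦ hk.of_succ hvr fun q hq ↦ ?_)
    (le_max_left d (Fintype.card ι - 1)) hlarge
  obtain ⟨p, hp, hqp⟩ := exists_isHomogeneous_sub_mul_mem_span_pair hm hn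
    (hd.trans (Nat.add_le_add_right hdk 2)) hg hh hq hr hgh
  obtain ⟨a, b, hab⟩ := Ideal.mem_span_pair.1 hqp
  refine ⟨p, hp, fun i ↦ sub_eq_zero.1 ?_⟩
  rw [← map_sub, ← hab, map_add, map_mul, map_mul, (hzero i).1, (hzero i).2, mul_zero, mul_zero,
    add_zero]

theorem imposesIndependentConditions_of_forall_common_zero (hm : 1 ≤ m) (hn : 1 ≤ n)
    (hd : m + n ≤ d + 2) (hg : g.IsHomogeneous m) (hh : h.IsHomogeneous n) (hv : ∀ i, v i ≠ 0)
    (hdist : Pairwise fun i j ↦ ∀ c : K, v i ≠ c • v j)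
    (hzero : ∀ i, eval (v i) g = 0 ∧ eval (v i) h = 0)
    (hall : ∀ w ≠ 0, eval w g = 0 → eval w h = 0 → ∃ i, ∃ c : K, w = c • v i) :
    ImposesIndependentConditions v d := by
  have := IsAlgClosed.instInfinite (K := K)
  obtain ⟨r, hr, hvr⟩ := exists_isHomogeneous_one_graph_avoiding hv
  refine imposesIndependentConditions_of_forall_restrictToGraph hm hn hd hg hh hr ?_ hvr hdist hzero
  intro w hw hgw hhw
  rw [eval_restrictToGraph] at hgw hhw
  set u : Fin 3 → K := Fin.cons (eval w r) w
  have hu0 : u ≠ 0 := fun h0 ↦ hw (congrArg Fin.tail h0)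
  have hur : eval u (X 0 - rename Fin.succ r) = 0 := by
    rw [map_sub, eval_X, eval_rename, sub_eq_zero]
    rfl
  obtain ⟨i, c, hc⟩ := hall u hu0 hgw hhw
  rw [hc, eval_smul_of_isHomogeneous (isHomogeneous_X_zero_sub_rename_succ hr), pow_one] at hur
  rcases mul_eq_zero.1 hur with rfl | hvi
  · exact hu0 (by rw [hc, zero_smul])
  · exact hvr i hvi

theorem statement5_general [CharZero K] (hm : 1 ≤ m) (hn : 1 ≤ n)
    (hd : m + n ≤ d + 2) (hg : g.IsHomogeneous m) (hh : h.IsHomogeneous n) (hv : ∀ i, v i ≠ 0)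
    (hdist : Pairwise fun i j ↦ ∀ c : K, v i ≠ c • v j)
    (hzero : ∀ i, eval (v i) g = 0 ∧ eval (v i) h = 0)
    (hall : ∀ w ≠ 0, eval w g = 0 → eval w h = 0 → ∃ i, ∃ c : K, w = c • v i) :
    ImposesIndependentConditions v d ∧
      LinearIndependent K fun i ↦ (∑ j, v i j • X j : MvPolynomial (Fin 3) K) ^ d :=
  have hindep :=
    imposesIndependentConditions_of_forall_common_zero hm hn hd hg hh hv hdist hzero hall
  ⟨hindep, hindep.linearIndependent_pow⟩

end PlaneCurves

/-- If `g, h` are homogeneous of degree `m` in three variables whose common projective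
zero locus consists of exactly `m²` distinct points `[v_1],…,[v_{m²}]` (a transverse
complete intersection), then these points impose independent conditions on forms of
degree `2m`: the evaluation map `p ↦ (p(v_1),…,p(v_{m²}))` on forms of degree `2m` is
surjective; equivalently, `ℓ_{v_1}^{2m},…,ℓ_{v_{m²}}^{2m}` are linearly independent. -/
theorem statement5 (m : ℕ) (hm : 1 ≤ m) (g h : MvPolynomial (Fin 3) ℂ)
    (hg : g.IsHomogeneous m) (hh : h.IsHomogeneous m)
    (v : Fin (m ^ 2) → Fin 3 → ℂ) (hv : ∀ i, v i ≠ 0)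
    (hdist : ∀ i j, i ≠ j → ∀ lam : ℂ, v i ≠ lam • v j)
    (hzero : ∀ i, MvPolynomial.eval (v i) g = 0 ∧ MvPolynomial.eval (v i) h = 0)
    (hall : ∀ w : Fin 3 → ℂ, w ≠ 0 → MvPolynomial.eval w g = 0 →
      MvPolynomial.eval w h = 0 → ∃ i, ∃ lam : ℂ, w = lam • v i) :
    (∀ y : Fin (m ^ 2) → ℂ, ∃ p : MvPolynomial (Fin 3) ℂ,
      p.IsHomogeneous (2 * m) ∧ ∀ i, MvPolynomial.eval (v i) p = y i) ∧
    LinearIndependent ℂ (fun i : Fin (m ^ 2) => (linForm 3 (v i)) ^ (2 * m)) := by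
  simpa [ImposesIndependentConditions, linForm, smul_eq_C_mul] using
    statement5_general hm hm (two_mul m ▸ Nat.le_add_right _ _) hg hh hv hdist hzero hall
end

section
/- Let f ∈ ℂ[x_0,x_1,x_2] be homogeneous of degree d and 1 ≤ m ≤ d−2, and let P_f be the Koszul flattening of f. If f = Σ_{i=1}^r c_i ℓ_{v_i}^d for some nonzero v_i ∈ ℂ³ and c_i ∈ ℂ, then rank P_f ≤ 2r. -/
/-!
Up to a numerical factor, `p(∂)` for `p` homogeneous of degree `m` sends `ℓ_v^n` to
`p(v) ℓ_v^{n-m}`. Hence `P_{ℓ_v^d}(p) = d(d-1)⋯(d-m) ℓ_v^{d-1-m} (p(v) × v)`, which factors through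
the cross product with `v`, a map of rank at most `2` since it kills `v`. As `f ↦ P_f` is linear and
rank is subadditive, each summand of `f = Σ c_i ℓ_{v_i}^d` contributes at most `2`.
-/

open MvPolynomial

/-- `diffOp p f = p(∂/∂x_0, …, ∂/∂x_{k-1})(f)`: the constant-coefficient differential
operator associated to `p`, applied to `f`.  For `p` homogeneous of degree `m` this is
the catalecticant `C_f^m` applied to `p`. -/
noncomputable def diffOp {k : ℕ} (p f : MvPolynomial (Fin k) ℂ) : MvPolynomial (Fin k) ℂ :=
  ∑ μ ∈ p.support, p.coeff μ •
    (((μ.support.sort (· ≤ ·)).map fun i =>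
        ((MvPolynomial.pderiv i).toLinearMap :
          Module.End ℂ (MvPolynomial (Fin k) ℂ)) ^ (μ i)).prod f)

/-- The Koszul flattening `P_f` (for `f ∈ ℂ[x_0,x_1,x_2]`): it sends a triple
`(p_0,p_1,p_2)` of (degree-`m`) polynomials to the triple
`(C_{f_2}p_1 − C_{f_1}p_2, C_{f_0}p_2 − C_{f_2}p_0, C_{f_1}p_0 − C_{f_0}p_1)`,
where `f_i = ∂f/∂x_i` and `C_{f_i}p = p(∂)(f_i)`. -/
noncomputable def koszulMap (f : MvPolynomial (Fin 3) ℂ)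
    (p : Fin 3 → MvPolynomial (Fin 3) ℂ) : Fin 3 → MvPolynomial (Fin 3) ℂ :=
  ![diffOp (p 1) (MvPolynomial.pderiv 2 f) - diffOp (p 2) (MvPolynomial.pderiv 1 f),
    diffOp (p 2) (MvPolynomial.pderiv 0 f) - diffOp (p 0) (MvPolynomial.pderiv 2 f),
    diffOp (p 0) (MvPolynomial.pderiv 1 f) - diffOp (p 1) (MvPolynomial.pderiv 0 f)]

section Derivation

variable {R A ι : Type*} [CommSemiring R] [CommSemiring A] [Algebra R A]

lemma derivation_pow_apply_pow {D : Derivation R A A} {x : A} {a : R}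
    (hD : D x = algebraMap R A a) (n e : ℕ) :
    (D.toLinearMap ^ e) (x ^ n) = ((n.descFactorial e : R) * a ^ e) • x ^ (n - e) := by
  induction e with
  | zero => simp
  | succ e ih =>
    have hpow (j : ℕ) : D (x ^ j) = ((j : R) * a) • x ^ (j - 1) := by
      rw [D.leibniz_pow, hD, smul_eq_mul, mul_comm, ← Algebra.smul_def, ← Nat.cast_smul_eq_nsmul R,
        smul_smul]
    rw [pow_succ', Module.End.mul_apply, ih, map_smul, Derivation.coeFn_coe, hpow, smul_smul,
      Nat.descFactorial_succ, Nat.sub_sub]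
    push_cast
    congr 1
    ring

lemma prod_map_derivation_pow_apply_pow {D : ι → Derivation R A A} {x : A} {a : ι → R}
    (hD : ∀ i, D i x = algebraMap R A (a i)) (n : ℕ) (e : ι → ℕ) (l : List ι) :
    (l.map fun i => (D i).toLinearMap ^ e i).prod (x ^ n) =
      ((n.descFactorial (l.map e).sum : R) * (l.map fun i => a i ^ e i).prod) •
        x ^ (n - (l.map e).sum) := by
  induction l with
  | nil => simp
  | cons i l ih =>
    have hfact := Nat.descFactorial_mul_descFactorial (n := n)
      (Nat.le_add_left (l.map e).sum (e i))
    rw [Nat.add_sub_cancel] at hfact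
    simp only [List.map_cons, List.prod_cons, List.sum_cons, Module.End.mul_apply, ih, map_smul,
      derivation_pow_apply_pow (hD i), smul_smul, Nat.sub_sub, Nat.add_comm (e i)]
    rw [Nat.add_comm, ← hfact]
    push_cast
    congr 1
    ring

end Derivation

lemma rank_smul_le {R V W : Type*} [CommSemiring R] [AddCommMonoid V] [Module R V]
    [AddCommMonoid W] [Module R W] (a : R) (g : V →ₗ[R] W) : (a • g).rank ≤ g.rank := by
  have hcomp : a • g = g ∘ₗ (a • LinearMap.id) := by ext; simp
  exact hcomp ▸ LinearMap.rank_comp_le_left _ g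

lemma rank_crossProduct_flip_le_two {K : Type*} [Field K] (v : Fin 3 → K) :
    (crossProduct.flip v).rank ≤ 2 := by
  rcases eq_or_ne v 0 with rfl | hv
  · simp
  have hker : LinearMap.ker (crossProduct.flip v) ≠ ⊥ :=
    Submodule.ne_bot_iff _ |>.mpr ⟨v, cross_self v, hv⟩
  have hfinrank : Module.finrank K (LinearMap.range (crossProduct.flip v)) ≤ 2 := by
    have hpos := Submodule.one_le_finrank_iff.mpr hker
    have hadd := (crossProduct.flip v).finrank_range_add_finrank_ker
    rw [Module.finrank_fin_fun] at hadd
    lia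
  rw [LinearMap.rank, ← Module.finrank_eq_rank]
  exact_mod_cast hfinrank

section DiffOp

variable {k m : ℕ}

/-- The pairing `(p, f) ↦ p(∂)(f)` as a bilinear map, defined on monomials `p` and extended
linearly. -/
noncomputable def diffOpBilin (k : ℕ) :
    MvPolynomial (Fin k) ℂ →ₗ[ℂ] MvPolynomial (Fin k) ℂ →ₗ[ℂ] MvPolynomial (Fin k) ℂ :=
  (basisMonomials (Fin k) ℂ).constr ℂ fun μ =>
    ((μ.support.sort (· ≤ ·)).map fun i => (pderiv i).toLinearMap ^ μ i).prod

lemma diffOpBilin_apply (p f : MvPolynomial (Fin k) ℂ) : diffOpBilin k p f = diffOp p f := by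
  rw [diffOpBilin, Module.Basis.constr_apply, Finsupp.sum, LinearMap.sum_apply]
  rfl

lemma pderiv_linForm (v : Fin k → ℂ) (i : Fin k) : pderiv i (linForm k v) = C (v i) := by
  simp [linForm, Derivation.leibniz, pderiv_X, Pi.single_apply]

lemma diffOp_linForm_pow {p : MvPolynomial (Fin k) ℂ} (hp : p.IsHomogeneous m)
    (v : Fin k → ℂ) (n : ℕ) :
    diffOp p (linForm k v ^ n) =
      ((n.descFactorial m : ℂ) * eval v p) • linForm k v ^ (n - m) := by
  rw [diffOp, eval_eq', Finset.mul_sum, Finset.sum_smul]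
  refine Finset.sum_congr rfl fun μ hμ => ?_
  have hsum : ((μ.support.sort (· ≤ ·)).map μ).sum = m := by
    rw [((Finset.sort_perm_toList _ _).map _).sum_eq, Finset.sum_map_toList, ← Finsupp.degree_apply,
      Finsupp.degree_eq_weight_one (R := ℕ)]
    exact hp (mem_support_iff.mp hμ)
  have hprod : ((μ.support.sort (· ≤ ·)).map fun i => v i ^ μ i).prod = ∏ i, v i ^ μ i := by
    rw [((Finset.sort_perm_toList _ _).map _).prod_eq, Finset.prod_map_toList]
    exact Finsupp.prod_fintype μ (fun i e => v i ^ e) fun _ => pow_zero _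
  rw [prod_map_derivation_pow_apply_pow (pderiv_linForm v), hsum, hprod, smul_smul]
  congr 1
  ring

lemma diffOp_pderiv_linForm_pow {p : MvPolynomial (Fin k) ℂ} (hp : p.IsHomogeneous m)
    (v : Fin k → ℂ) (i : Fin k) (d : ℕ) :
    diffOp p (pderiv i (linForm k v ^ d)) =
      (eval v p * v i) • (d.descFactorial (m + 1) : ℂ) • linForm k v ^ (d - (m + 1)) := by
  have hfact := Nat.descFactorial_mul_descFactorial (n := d) (Nat.le_add_left 1 m)
  have hpderiv := derivation_pow_apply_pow (pderiv_linForm v i) d 1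
  rw [pow_one, pow_one, Derivation.coeFn_coe] at hpderiv
  rw [hpderiv, ← diffOpBilin_apply, map_smul, diffOpBilin_apply, diffOp_linForm_pow hp, ← hfact,
    Nat.add_sub_cancel, Nat.sub_sub, Nat.add_comm 1, smul_smul, smul_smul]
  push_cast
  congr 1
  ring

end DiffOp

lemma koszulMap_add_left (f g : MvPolynomial (Fin 3) ℂ) (p : Fin 3 → MvPolynomial (Fin 3) ℂ) :
    koszulMap (f + g) p = koszulMap f p + koszulMap g p := by
  simp only [koszulMap, ← diffOpBilin_apply, map_add]
  ext1 j
  fin_cases j <;> exact add_sub_add_comm _ _ _ _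

lemma koszulMap_smul_left (a : ℂ) (f : MvPolynomial (Fin 3) ℂ)
    (p : Fin 3 → MvPolynomial (Fin 3) ℂ) : koszulMap (a • f) p = a • koszulMap f p := by
  simp only [koszulMap, ← diffOpBilin_apply, Derivation.map_smul, map_smul]
  ext1 j
  fin_cases j <;> exact (smul_sub _ _ _).symm

lemma koszulMap_add_right (f : MvPolynomial (Fin 3) ℂ) (p q : Fin 3 → MvPolynomial (Fin 3) ℂ) :
    koszulMap f (p + q) = koszulMap f p + koszulMap f q := by
  simp only [koszulMap, ← diffOpBilin_apply, Pi.add_apply, map_add, LinearMap.add_apply]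
  ext1 j
  fin_cases j <;> exact add_sub_add_comm _ _ _ _

lemma koszulMap_smul_right (a : ℂ) (f : MvPolynomial (Fin 3) ℂ)
    (p : Fin 3 → MvPolynomial (Fin 3) ℂ) : koszulMap f (a • p) = a • koszulMap f p := by
  simp only [koszulMap, ← diffOpBilin_apply, Pi.smul_apply, map_smul, LinearMap.smul_apply]
  ext1 j
  fin_cases j <;> exact (smul_sub _ _ _).symm

/-- The Koszul flattening `P_f`, as a linear map on triples of homogeneous polynomials of degree
`m` which moreover depends linearly on `f`. -/
noncomputable def koszulFlattening (m : ℕ) :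
    MvPolynomial (Fin 3) ℂ →ₗ[ℂ] (Fin 3 → homogeneousSubmodule (Fin 3) ℂ m) →ₗ[ℂ]
      (Fin 3 → MvPolynomial (Fin 3) ℂ) :=
  LinearMap.mk₂ ℂ (fun f p => koszulMap f fun j => p j)
    (fun _ _ _ => koszulMap_add_left _ _ _) (fun _ _ _ => koszulMap_smul_left _ _ _)
    (fun _ _ _ => koszulMap_add_right _ _ _) (fun _ _ _ => koszulMap_smul_right _ _ _)

lemma coe_range_koszulFlattening (m : ℕ) (f : MvPolynomial (Fin 3) ℂ) :
    (LinearMap.range (koszulFlattening m f) : Set (Fin 3 → MvPolynomial (Fin 3) ℂ)) =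
      {g | ∃ p : Fin 3 → MvPolynomial (Fin 3) ℂ,
        (∀ j, (p j).IsHomogeneous m) ∧ g = koszulMap f p} := by
  ext g
  constructor
  · rintro ⟨p, rfl⟩
    exact ⟨fun j => p j, fun j => (p j).2, rfl⟩
  · rintro ⟨p, hp, rfl⟩
    exact ⟨fun j => ⟨p j, hp j⟩, rfl⟩

open scoped Matrix in
lemma koszulMap_linForm_pow {m : ℕ} {p : Fin 3 → MvPolynomial (Fin 3) ℂ}
    (hp : ∀ j, (p j).IsHomogeneous m) (v : Fin 3 → ℂ) (d : ℕ) :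
    koszulMap (linForm 3 v ^ d) p = fun j =>
      ((fun i => eval v (p i)) ⨯₃ v) j •
        (d.descFactorial (m + 1) : ℂ) • linForm 3 v ^ (d - (m + 1)) := by
  simp only [koszulMap, diffOp_pderiv_linForm_pow (hp _), ← sub_smul]
  ext1 j
  fin_cases j <;> rfl

lemma rank_koszulFlattening_linForm_pow_le_two (m d : ℕ) (v : Fin 3 → ℂ) :
    (koszulFlattening m (linForm 3 v ^ d)).rank ≤ 2 := by
  let scale : (Fin 3 → ℂ) →ₗ[ℂ] Fin 3 → MvPolynomial (Fin 3) ℂ :=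
    (LinearMap.toSpanSingleton ℂ _
      ((d.descFactorial (m + 1) : ℂ) • linForm 3 v ^ (d - (m + 1)))).compLeft (Fin 3)
  have hle : LinearMap.range (koszulFlattening m (linForm 3 v ^ d)) ≤
      LinearMap.range (scale ∘ₗ crossProduct.flip v) := by
    rintro _ ⟨p, rfl⟩
    exact ⟨fun i => eval v (p i).1, (koszulMap_linForm_pow (fun j => (p j).2) v d).symm⟩
  calc (koszulFlattening m (linForm 3 v ^ d)).rank
      ≤ (scale ∘ₗ crossProduct.flip v).rank := Submodule.rank_mono hle
    _ ≤ (crossProduct.flip v).rank := LinearMap.rank_comp_le_right _ _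
    _ ≤ 2 := rank_crossProduct_flip_le_two v

lemma rank_koszulFlattening_sum_linForm_pow_le {ι : Type*} (m d : ℕ) (s : Finset ι) (c : ι → ℂ)
    (v : ι → Fin 3 → ℂ) :
    (koszulFlattening m (∑ i ∈ s, c i • linForm 3 (v i) ^ d)).rank ≤
      ((2 * s.card : ℕ) : Cardinal) :=
  calc (koszulFlattening m (∑ i ∈ s, c i • linForm 3 (v i) ^ d)).rank
      = (∑ i ∈ s, c i • koszulFlattening m (linForm 3 (v i) ^ d)).rank := by
        simp only [map_sum, map_smul]
    _ ≤ ∑ i ∈ s, (c i • koszulFlattening m (linForm 3 (v i) ^ d)).rank :=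
        LinearMap.rank_finsetSum_le _ _
    _ ≤ ∑ _i ∈ s, 2 := Finset.sum_le_sum fun i _ =>
        (rank_smul_le _ _).trans (rank_koszulFlattening_linForm_pow_le_two m d (v i))
    _ = ((2 * s.card : ℕ) : Cardinal) := by simp [mul_comm]

/-- Subadditivity bound for the Koszul flattening: if `f ∈ ℂ[x_0,x_1,x_2]` is homogeneous
of degree `d`, `1 ≤ m ≤ d − 2`, and `f = Σ_{i=1}^r c_i ℓ_{v_i}^d`, then
`rank P_f ≤ 2r`, where the rank of `P_f` is the dimension of the span of the images of
all triples of homogeneous degree-`m` polynomials. -/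
theorem statement6 (d m r : ℕ) (hm : 1 ≤ m) (hmd : m + 2 ≤ d)
    (f : MvPolynomial (Fin 3) ℂ) (hf : f.IsHomogeneous d)
    (c : Fin r → ℂ) (v : Fin r → Fin 3 → ℂ) (hv : ∀ i, v i ≠ 0)
    (hdecomp : f = ∑ i, c i • (linForm 3 (v i)) ^ d) :
    Module.rank ℂ ↥(Submodule.span ℂ
      {g : Fin 3 → MvPolynomial (Fin 3) ℂ |
        ∃ p : Fin 3 → MvPolynomial (Fin 3) ℂ,
          (∀ j, (p j).IsHomogeneous m) ∧ g = koszulMap f p})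
      ≤ ((2 * r : ℕ) : Cardinal) := by
  rw [← coe_range_koszulFlattening, Submodule.span_eq, hdecomp]
  simpa only [Finset.card_fin] using rank_koszulFlattening_sum_linForm_pow_le m d Finset.univ c v
end
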